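/- Let T be a tree of order n with n ≥ 3. Then φ(T) = ⌈n/2⌉ + 1 if and only if n is even and T is isomorphic to T(n/2, (n-2)/2), or n is odd and T is isomorphic to T((n-1)/2, (n-1)/2) or to T((n+1)/2, (n-3)/2). -/

import Mathlib

open SimpleGraph

/-- A dissociation set: a set of vertices inducing a subgraph of maximum degree at most 1,
i.e., every vertex of `S` has at most one neighbour inside `S`. -/
def IsDissoc {V : Type*} (G : SimpleGraph V) (S : Set V) : Prop :=
  ∀ v ∈ S, {u | u ∈ S ∧ G.Adj v u}.Subsingleton

/-- A maximal dissociation set: a dissociation set not properly contained in another one. -/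
def IsMaxDissoc {V : Type*} (G : SimpleGraph V) (S : Set V) : Prop :=
  IsDissoc G S ∧ ∀ T : Set V, IsDissoc G T → S ⊆ T → S = T

/-- `phi G` is the number of maximal dissociation sets of `G`. -/
noncomputable def phi {V : Type*} (G : SimpleGraph V) : ℕ :=
  {S : Set V | IsMaxDissoc G S}.ncard

/-- The number of maximal dissociation sets of `G` not containing `u`. -/
noncomputable def phiNot {V : Type*} (G : SimpleGraph V) (u : V) : ℕ :=
  {S : Set V | IsMaxDissoc G S ∧ u ∉ S}.ncard

/-- The number of maximal dissociation sets `S` of `G` with `u ∈ S` and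
`u` of degree 0 in the subgraph induced by `S`. -/
noncomputable def phi0 {V : Type*} (G : SimpleGraph V) (u : V) : ℕ :=
  {S : Set V | IsMaxDissoc G S ∧ u ∈ S ∧ ∀ x ∈ S, ¬ G.Adj u x}.ncard

/-- The number of maximal dissociation sets `S` of `G` with `u ∈ S` and
`u` of degree 1 in the subgraph induced by `S`. -/
noncomputable def phi1 {V : Type*} (G : SimpleGraph V) (u : V) : ℕ :=
  {S : Set V | IsMaxDissoc G S ∧ u ∈ S ∧ ∃! x, x ∈ S ∧ G.Adj u x}.ncard

/-- A unicyclic graph: a connected graph whose number of edges equals its number of vertices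
(equivalently, a connected graph with exactly one cycle). -/
def IsUnicyclic {V : Type*} [Fintype V] (G : SimpleGraph V) : Prop :=
  G.Connected ∧ G.edgeSet.ncard = Fintype.card V

/-- The tree `T(p,q)` (for `q ≤ p`): obtained from the star `K_{1,p}` by subdividing
exactly `q` of its edges.  The centre is `Sum.inl ()`, the `p` neighbours of the centre are
`Sum.inr (Sum.inl i)`, and for `j < q` the vertex `Sum.inr (Sum.inr j)` is the subdivision
pendant attached to the `j`-th neighbour.  It has `1 + p + q` vertices. -/
def treeT (p q : ℕ) (h : q ≤ p) : SimpleGraph (Unit ⊕ Fin p ⊕ Fin q) :=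
  SimpleGraph.fromRel fun a b =>
    (∃ i : Fin p, a = Sum.inl () ∧ b = Sum.inr (Sum.inl i)) ∨
    (∃ j : Fin q, a = Sum.inr (Sum.inl (Fin.castLE h j)) ∧ b = Sum.inr (Sum.inr j))

/-- The unicyclic graph `U(p,q)` (for `q ≤ p`): obtained by identifying one vertex of the
triangle `K₃` with the centre of `T(p,q)`.  The centre is `Sum.inl ()`, the two other triangle
vertices are `Sum.inr (Sum.inl 0)` and `Sum.inr (Sum.inl 1)`, and the copy of `T(p,q)` sits on
the remaining vertices.  It has `3 + p + q` vertices. -/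
def graphU (p q : ℕ) (h : q ≤ p) : SimpleGraph (Unit ⊕ Fin 2 ⊕ Fin p ⊕ Fin q) :=
  SimpleGraph.fromRel fun a b =>
    (a = Sum.inl () ∧ b = Sum.inr (Sum.inl 0)) ∨
    (a = Sum.inl () ∧ b = Sum.inr (Sum.inl 1)) ∨
    (a = Sum.inr (Sum.inl 0) ∧ b = Sum.inr (Sum.inl 1)) ∨
    (∃ i : Fin p, a = Sum.inl () ∧ b = Sum.inr (Sum.inr (Sum.inl i))) ∨
    (∃ j : Fin q, a = Sum.inr (Sum.inr (Sum.inl (Fin.castLE h j))) ∧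
      b = Sum.inr (Sum.inr (Sum.inr j)))

/-- The unicyclic graph obtained from the cycle `C_r` by attaching one pendant vertex
`Sum.inr j` to the cycle vertex `Sum.inl (f j)` for each `j : Fin t`.  For injective `f`
this is a member of the class `𝒰_{r,t}`. -/
def graphUrtF (r t : ℕ) (f : Fin t → Fin r) : SimpleGraph (Fin r ⊕ Fin t) :=
  SimpleGraph.fromRel fun a b =>
    (∃ i j : Fin r, a = Sum.inl i ∧ b = Sum.inl j ∧ (cycleGraph r).Adj i j) ∨
    (∃ j : Fin t, a = Sum.inl (f j) ∧ b = Sum.inr j)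

/-- The canonical member `U_{r,t}` of `𝒰_{r,t}` (for `t ≤ r`): the cycle `C_r` with one
pendant vertex attached to each of its first `t` vertices. -/
def graphUrt (r t : ℕ) (h : t ≤ r) : SimpleGraph (Fin r ⊕ Fin t) :=
  graphUrtF r t (Fin.castLE h)

/-- A caterpillar: a tree in which deleting all vertices of degree 1 leaves a path. -/
def IsCaterpillar {V : Type*} [Fintype V] (G : SimpleGraph V) : Prop :=
  G.IsTree ∧ ∃ m : ℕ,
    Nonempty ((G.induce {v | 2 ≤ (G.neighborSet v).ncard}) ≃g SimpleGraph.pathGraph m)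

/-- The graph `G₁` obtained from `U` by adding `k` new pendant vertices
`v₁ = Sum.inr 0, …, v_k = Sum.inr (k-1)`, each adjacent to `w`. -/
def addPendants {V : Type*} (U : SimpleGraph V) (w : V) (k : ℕ) : SimpleGraph (V ⊕ Fin k) :=
  SimpleGraph.fromRel fun a b =>
    (∃ x y, a = Sum.inl x ∧ b = Sum.inl y ∧ U.Adj x y) ∨
    (∃ j : Fin k, a = Sum.inl w ∧ b = Sum.inr j)

/-- The graph `G₂ = G₁ - w v_k + v₁ v_k`: obtained from `U` by attaching the pendant vertices
`v₁, …, v_{k-1}` to `w` and the vertex `v_k` to `v₁`. -/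
def swapPendant {V : Type*} (U : SimpleGraph V) (w : V) (k : ℕ) : SimpleGraph (V ⊕ Fin k) :=
  SimpleGraph.fromRel fun a b =>
    (∃ x y, a = Sum.inl x ∧ b = Sum.inl y ∧ U.Adj x y) ∨
    (∃ j : Fin k, j.val < k - 1 ∧ a = Sum.inl w ∧ b = Sum.inr j) ∨
    (∃ j₀ j₁ : Fin k, j₀.val = 0 ∧ j₁.val = k - 1 ∧ a = Sum.inr j₀ ∧ b = Sum.inr j₁)

/-- The graph obtained from `H` by attaching a pendant path of length 2 at `w`:
two new vertices `v = Sum.inr 0` and `u = Sum.inr 1` with edges `w v` and `v u`. -/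
def addPath2 {V : Type*} (H : SimpleGraph V) (w : V) : SimpleGraph (V ⊕ Fin 2) :=
  SimpleGraph.fromRel fun a b =>
    (∃ x y, a = Sum.inl x ∧ b = Sum.inl y ∧ H.Adj x y) ∨
    (a = Sum.inl w ∧ b = Sum.inr 0) ∨
    (a = Sum.inr 0 ∧ b = Sum.inr 1)

section Basic

variable {V W : Type*} {G : SimpleGraph V} {H : SimpleGraph W}

lemma isDissoc_iff {S : Set V} :
    IsDissoc G S ↔ ∀ v ∈ S, ∀ a ∈ S, ∀ b ∈ S, G.Adj v a → G.Adj v b → a = b :=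
  ⟨fun h v hv _ ha _ hb hva hvb => h v hv ⟨ha, hva⟩ ⟨hb, hvb⟩,
    fun h v hv _ ha _ hb => h v hv _ ha.1 _ hb.1 ha.2 hb.2⟩

lemma IsDissoc.mono {S S' : Set V} (h : IsDissoc G S') (hS : S ⊆ S') : IsDissoc G S :=
  fun v hv => (h v (hS hv)).anti fun _ ha => ⟨hS ha.1, ha.2⟩

lemma isMaxDissoc_iff_forall_insert {S : Set V} :
    IsMaxDissoc G S ↔ IsDissoc G S ∧ ∀ x ∉ S, ¬ IsDissoc G (insert x S) := by
  refine ⟨fun h => ⟨h.1, fun x hx hd => hx ?_⟩, fun h => ⟨h.1, fun S' hS' hle => ?_⟩⟩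
  · rw [h.2 _ hd (Set.subset_insert x S)]
    exact Set.mem_insert x S
  · refine hle.antisymm fun x hx => by_contra fun hxS => ?_
    exact h.2 x hxS (hS'.mono (Set.insert_subset hx hle))

lemma IsDissoc.exists_isMaxDissoc_superset [Finite V] {S : Set V} (h : IsDissoc G S) :
    ∃ S', S ⊆ S' ∧ IsMaxDissoc G S' := by
  obtain ⟨S', hle, hmax⟩ := (Set.toFinite {S : Set V | IsDissoc G S}).exists_le_maximal h
  exact ⟨S', hle, hmax.1, fun R hR hSR => hSR.antisymm (hmax.2 hR hSR)⟩

lemma IsDissoc.preimage {S : Set V} (h : IsDissoc G S) (f : H ↪g G) :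
    IsDissoc H (f ⁻¹' S) := by
  rw [isDissoc_iff] at h ⊢
  exact fun v hv a ha b hb hva hvb =>
    f.injective (h _ hv _ ha _ hb (f.map_adj_iff.2 hva) (f.map_adj_iff.2 hvb))

lemma IsDissoc.image {S : Set W} (h : IsDissoc H S) (f : H ↪g G) : IsDissoc G (f '' S) := by
  rw [isDissoc_iff] at h ⊢
  rintro _ ⟨v, hv, rfl⟩ _ ⟨a, ha, rfl⟩ _ ⟨b, hb, rfl⟩ hva hvb
  rw [h v hv a ha b hb (f.map_adj_iff.1 hva) (f.map_adj_iff.1 hvb)]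

/-- A maximal dissociation set of an induced subgraph is the trace of every dissociation set
containing it. -/
lemma IsMaxDissoc.preimage_eq {A : Set W} {B : Set V} (hA : IsMaxDissoc H A) (f : H ↪g G)
    (hB : IsDissoc G B) (h : f '' A ⊆ B) : f ⁻¹' B = A :=
  (hA.2 _ (hB.preimage f) (Set.image_subset_iff.1 h)).symm

lemma isDissoc_pair (a b : V) : IsDissoc G {a, b} := by
  rw [isDissoc_iff]
  rintro v (rfl | rfl) x (rfl | rfl) y (rfl | rfl) hx hy <;>
    first | rfl | exact (hx.ne rfl).elim | exact (hy.ne rfl).elim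

/-- Maximal dissociation sets of `H` extend to pairwise distinct maximal dissociation sets
of `G`. -/
lemma phi_add_ncard_le [Finite V] (f : W → V) (F : Set (Set V))
    (hF : ∀ S ∈ F, IsMaxDissoc G S)
    (h : ∀ A, IsMaxDissoc H A → ∃ B, IsMaxDissoc G B ∧ f ⁻¹' B = A ∧ B ∉ F) :
    phi H + F.ncard ≤ phi G := by
  choose! e he hef heF using h
  have hinj : Set.InjOn e {A | IsMaxDissoc H A} := fun A hA B hB hAB => by
    rw [← hef A hA, ← hef B hB, hAB]
  rw [phi, phi, ← hinj.ncard_image, ← Set.ncard_union_eq]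
  · refine Set.ncard_le_ncard ?_
    rintro S (⟨A, hA, rfl⟩ | hS)
    exacts [he A hA, hF S hS]
  · rw [Set.disjoint_left]
    rintro _ ⟨A, hA, rfl⟩
    exact heF A hA

lemma phi_le_of_embedding [Finite V] (f : H ↪g G) : phi H ≤ phi G := by
  have h := phi_add_ncard_le (G := G) (H := H) f ∅ (by simp) fun A hA => by
    obtain ⟨B, hle, hB⟩ := (hA.1.image f).exists_isMaxDissoc_superset
    exact ⟨B, hB, hA.preimage_eq f hB.1 hle, by simp⟩
  simpa using h

lemma phi_congr [Finite V] [Finite W] (e : G ≃g H) : phi G = phi H :=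
  (phi_le_of_embedding e.toEmbedding).antisymm (phi_le_of_embedding e.symm.toEmbedding)

end Basic

section Tree

lemma treeT_center_adj {p q : ℕ} {h : q ≤ p} (i : Fin p) :
    (treeT p q h).Adj (Sum.inl ()) (Sum.inr (Sum.inl i)) := by
  simp [treeT]

lemma treeT_not_center_adj {p q : ℕ} {h : q ≤ p} (j : Fin q) :
    ¬ (treeT p q h).Adj (Sum.inl ()) (Sum.inr (Sum.inr j)) := by
  simp [treeT]

lemma treeT_not_inl_adj {p q : ℕ} {h : q ≤ p} (i k : Fin p) :
    ¬ (treeT p q h).Adj (Sum.inr (Sum.inl i)) (Sum.inr (Sum.inl k)) := by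
  simp [treeT]

lemma treeT_not_inr_adj {p q : ℕ} {h : q ≤ p} (j k : Fin q) :
    ¬ (treeT p q h).Adj (Sum.inr (Sum.inr j)) (Sum.inr (Sum.inr k)) := by
  simp [treeT]

lemma treeT_adj_iff {p q : ℕ} {h : q ≤ p} (i : Fin p) (j : Fin q) :
    (treeT p q h).Adj (Sum.inr (Sum.inl i)) (Sum.inr (Sum.inr j)) ↔ i = Fin.castLE h j := by
  simp [treeT]

lemma isDissoc_treeT_compl_center {p q : ℕ} (h : q ≤ p) :
    IsDissoc (treeT p q h) {Sum.inl ()}ᶜ := by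
  rw [isDissoc_iff]
  rintro (⟨⟩ | i | i) hv (⟨⟩ | a | a) ha (⟨⟩ | b | b) hb hva hvb <;>
    simp [treeT, Fin.ext_iff] at * <;> omega

lemma isDissoc_treeT_center_inl {p q : ℕ} (h : q ≤ p) (i : Fin p) :
    IsDissoc (treeT p q h) {x | (∀ k, x = Sum.inr (Sum.inl k) → k = i) ∧
      ∀ j, x = Sum.inr (Sum.inr j) → Fin.castLE h j ≠ i} := by
  rw [isDissoc_iff]
  rintro (⟨⟩ | v | v) hv (⟨⟩ | a | a) ha (⟨⟩ | b | b) hb hva hvb <;>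
    simp [treeT, Fin.ext_iff] at * <;> first | omega | grind

lemma isDissoc_treeT_of_forall_ne_inl {p q : ℕ} (h : q ≤ p) :
    IsDissoc (treeT p q h) {x | ∀ i, x ≠ Sum.inr (Sum.inl i)} := by
  rw [isDissoc_iff]
  rintro (⟨⟩ | v | v) hv (⟨⟩ | a | a) ha (⟨⟩ | b | b) hb hva hvb <;>
    simp [treeT] at *

lemma phi_treeT {p q : ℕ} (h : q ≤ p) (hpq : 2 ≤ p + q) :
    phi (treeT p q h) = p + 1 + if p = q then 1 else 0 := by
  let A : Set (Unit ⊕ Fin p ⊕ Fin q) := {Sum.inl ()}ᶜ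
  let C : Set (Unit ⊕ Fin p ⊕ Fin q) := {x | ∀ i, x ≠ Sum.inr (Sum.inl i)}
  let B : Fin p → Set (Unit ⊕ Fin p ⊕ Fin q) := fun i =>
    {x | (∀ k, x = Sum.inr (Sum.inl k) → k = i) ∧
      ∀ j, x = Sum.inr (Sum.inr j) → Fin.castLE h j ≠ i}
  have hA : IsDissoc (treeT p q h) A := isDissoc_treeT_compl_center h
  have hB (i) : IsDissoc (treeT p q h) (B i) := isDissoc_treeT_center_inl h i
  have hC : IsDissoc (treeT p q h) C := isDissoc_treeT_of_forall_ne_inl h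
  have huniq {S} (hS : IsDissoc (treeT p q h) S) (hc : Sum.inl () ∈ S) {i k}
      (hi : Sum.inr (Sum.inl i) ∈ S) (hk : Sum.inr (Sum.inl k) ∈ S) : k = i := by
    simpa using isDissoc_iff.1 hS _ hc _ hk _ hi (treeT_center_adj k) (treeT_center_adj i)
  have hpend {S} (hS : IsDissoc (treeT p q h) S) (hc : Sum.inl () ∈ S) {i j}
      (hi : Sum.inr (Sum.inl i) ∈ S) (hj : Sum.inr (Sum.inr j) ∈ S) : Fin.castLE h j ≠ i := by
    intro hij
    simpa using isDissoc_iff.1 hS _ hi _ hc _ hj (treeT_center_adj i).symm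
      ((treeT_adj_iff i j).2 hij.symm)
  have hle {S} (hS : IsDissoc (treeT p q h) S) (hc : Sum.inl () ∈ S) {i}
      (hi : Sum.inr (Sum.inl i) ∈ S) : S ⊆ B i := by
    refine fun x hx => ⟨?_, ?_⟩
    · rintro k rfl
      exact huniq hS hc hi hx
    · rintro j rfl
      exact hpend hS hc hi hx
  have hcB (i) : Sum.inl () ∈ B i := by simp [B]
  have hiB (i) : Sum.inr (Sum.inl i) ∈ B i := by simp [B]
  have hmA : IsMaxDissoc (treeT p q h) A := by
    refine isMaxDissoc_iff_forall_insert.2 ⟨hA, fun x hx hd => ?_⟩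
    obtain rfl : x = Sum.inl () := by simpa [A] using hx
    by_cases hp : 2 ≤ p
    · have h01 := huniq hd (Set.mem_insert _ _) (i := ⟨0, by omega⟩) (k := ⟨1, by omega⟩)
        (by simp [A]) (by simp [A])
      exact one_ne_zero (Fin.ext_iff.1 h01)
    · exact hpend hd (Set.mem_insert _ _) (i := ⟨0, by omega⟩) (j := ⟨0, by omega⟩)
        (by simp [A]) (by simp [A]) rfl
  have hmB (i) : IsMaxDissoc (treeT p q h) (B i) :=
    ⟨hB i, fun S hS hBS => hBS.antisymm (hle hS (hBS (hcB i)) (hBS (hiB i)))⟩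
  have hmax {S} (hS : IsMaxDissoc (treeT p q h) S) : S = A ∨ (∃ i, B i = S) ∨ S = C := by
    by_cases hc : Sum.inl () ∈ S
    · by_cases hi : ∃ i, Sum.inr (Sum.inl i) ∈ S
      · obtain ⟨i, hi⟩ := hi
        exact Or.inr (Or.inl ⟨i, (hS.2 _ (hB i) (hle hS.1 hc hi)).symm⟩)
      · exact Or.inr (Or.inr (hS.2 _ hC fun x hx i hxi => hi ⟨i, hxi ▸ hx⟩))
    · exact Or.inl (hS.2 _ hA fun x hx hxc => hc (hxc ▸ hx))
  have hmC : IsMaxDissoc (treeT p q h) C ↔ p = q := by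
    refine ⟨fun hm => ?_, ?_⟩
    · by_contra hne
      have hlt : q < p := lt_of_le_of_ne h (Ne.symm hne)
      have hCB := hm.2 (B ⟨q, hlt⟩) (hB _) fun x hx => by
        refine ⟨fun k hk => (hx k hk).elim, fun j _ hj => ?_⟩
        have := congrArg Fin.val hj
        simp at this
        omega
      exact (hCB ▸ hiB ⟨q, hlt⟩ : _ ∈ C) _ rfl
    · rintro rfl
      refine ⟨hC, fun S hS hCS => hCS.antisymm fun x hx i hi => ?_⟩
      subst hi
      exact hpend hS (hCS (by simp [C])) (j := i) hx (hCS (by simp [C])) (by simp)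
  have hBinj : Function.Injective B := fun i k hik => by
    have : Sum.inr (Sum.inl i) ∈ B k := hik ▸ hiB i
    exact this.1 i rfl
  have hAB : A ∉ Set.range B := by
    rintro ⟨i, hi⟩
    exact (hi ▸ hcB i : _ ∈ A) rfl
  have hX : (insert A (Set.range B)).ncard = p + 1 := by
    rw [Set.ncard_insert_of_notMem hAB, Set.ncard_range_of_injective hBinj]
    simp
  rw [phi]
  split_ifs with hpq
  · rw [← hX, ← Set.ncard_insert_of_notMem (a := C)]
    · congr 1
      ext S
      refine ⟨fun hS => ?_, ?_⟩
      · rcases hmax hS with h | h | h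
        exacts [.inr (.inl h), .inr (.inr h), .inl h]
      · rintro (rfl | rfl | ⟨i, rfl⟩)
        exacts [hmC.2 hpq, hmA, hmB i]
    · rintro (hCA | ⟨i, hi⟩)
      · exact (hCA ▸ (by simp [C] : Sum.inl () ∈ C) : Sum.inl () ∈ A) rfl
      · exact (hi ▸ hiB i : _ ∈ C) i rfl
  · rw [add_zero, ← hX]
    congr 1
    ext S
    refine ⟨fun hS => ?_, ?_⟩
    · rcases hmax hS with h | h | h
      exacts [.inl h, .inr h, (hpq (hmC.1 (h ▸ hS))).elim]
    · rintro (rfl | ⟨i, rfl⟩)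
      exacts [hmA, hmB i]

end Tree

section Structure

variable {V : Type*} {T : SimpleGraph V}

lemma SimpleGraph.Connected.exists_adj_adj_of_isDissoc_compl (hT : T.Connected) {c y : V}
    (hc : IsDissoc T {c}ᶜ) (hy : y ≠ c) (hcy : ¬ T.Adj c y) : ∃ m, T.Adj y m ∧ T.Adj c m := by
  obtain ⟨p, hp⟩ := hT.exists_isPath y c
  match p, hp with
  | .nil, _ => exact (hy rfl).elim
  | .cons h .nil, _ => exact (hcy h.symm).elim
  | .cons (v := m) h (.cons (v := x) h' r), hp =>
    refine ⟨m, h, ?_⟩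
    by_cases hx : x = c
    · exact hx ▸ h'.symm
    · have hyx : y ≠ x := by
        rintro rfl
        simp at hp
      have hm : m ≠ c := by
        rintro rfl
        exact hcy h.symm
      exact (hyx (isDissoc_iff.1 hc m hm y hy x hx h.symm h')).elim

/-- A tree that becomes a dissociation set after deleting one vertex is some `T(p,q)`. -/
lemma SimpleGraph.IsTree.exists_iso_treeT [Finite V] (hT : T.IsTree) {c : V}
    (hc : IsDissoc T {c}ᶜ) : ∃ (p q : ℕ) (h : q ≤ p), Nonempty (T ≃g treeT p q h) := by
  classical
  have := Fintype.ofFinite V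
  let Q := {y // y ≠ c ∧ ¬ T.Adj c y}
  have hpar : ∀ y : Q, ∃ m, T.Adj y m ∧ T.Adj c m := fun y =>
    hT.connected.exists_adj_adj_of_isDissoc_compl hc y.2.1 y.2.2
  choose par hadj hcpar using hpar
  have hinj : Function.Injective par := fun y z hyz =>
    Subtype.ext (isDissoc_iff.1 hc (par y) (hcpar y).ne' y y.2.1 z z.2.1 (hadj y).symm
      (hyz ▸ (hadj z).symm))
  let P : Finset V := {m | T.Adj c m}
  have hle : Fintype.card Q ≤ P.card := by
    rw [← Finset.card_univ, ← Finset.card_image_of_injective _ hinj]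
    exact Finset.card_le_card fun m hm => by
      obtain ⟨y, -, rfl⟩ := Finset.mem_image.1 hm
      simpa [P] using hcpar y
  let eQ : Fin (Fintype.card Q) ≃ Q := (Fintype.equivFin Q).symm
  obtain ⟨g, hg⟩ := Set.MapsTo.exists_equiv_extend_of_card_eq (t := P) (Fintype.card_fin _)
    (s := {i : Fin P.card | i.val < Fintype.card Q})
    (f := fun i => if h : i.val < Fintype.card Q then par (eQ ⟨i, h⟩) else c)
    (fun i (hi : i.val < _) => by simpa [hi, P] using hcpar _)
    (fun i (hi : i.val < _) j (hj : j.val < _) hij => by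
      simp only [hi, hj, dif_pos] at hij
      simpa [Fin.ext_iff] using eQ.injective (hinj hij))
  have hgpar (j) : (g (Fin.castLE hle j) : V) = par (eQ j) := by
    rw [hg (Fin.castLE hle j) j.2]
    simp
  have hcg (i) : T.Adj c (g i) := (Finset.mem_filter.1 (g i).2).2
  have hcQ (j) : ¬ T.Adj c (eQ j) := (eQ j).2.2
  have hcQ' (j) : ¬ T.Adj (eQ j) c := fun h => hcQ j h.symm
  have hgg (i k) : ¬ T.Adj (g i) (g k) := fun h => by
    refine hT.isAcyclic.cliqueFree le_rfl {c, (g i : V), (g k : V)} ?_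
    exact is3Clique_triple_iff.2 ⟨hcg i, hcg k, h⟩
  have hQQ (j k) : ¬ T.Adj (eQ j) (eQ k) := fun h => by
    have := isDissoc_iff.1 hc _ (eQ j).2.1 _ (eQ k).2.1 _ (hcpar (eQ j)).ne' h (hadj _)
    exact hcQ k (this ▸ hcpar _)
  have hgQ (i j) : T.Adj (g i) (eQ j) ↔ i = Fin.castLE hle j := by
    refine ⟨fun h => g.injective (Subtype.ext ?_), ?_⟩
    · rw [hgpar]
      exact isDissoc_iff.1 hc _ (eQ j).2.1 _ (hcg i).ne' _ (hcpar _).ne' h.symm (hadj _)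
    · rintro rfl
      rw [hgpar]
      exact (hadj _).symm
  let φ : Unit ⊕ Fin P.card ⊕ Fin (Fintype.card Q) → V :=
    Sum.elim (fun _ => c) (Sum.elim (fun i => g i) (fun j => eQ j))
  have hφ : Function.Bijective φ := by
    constructor
    · rintro (⟨⟩ | i | i) (⟨⟩ | k | k) h
      · rfl
      · exact ((hcg k).ne h).elim
      · exact ((eQ k).2.1 h.symm).elim
      · exact ((hcg i).ne' h).elim
      · rw [g.injective (Subtype.ext h)]
      · exact (hcQ k ((show (g i : V) = eQ k from h) ▸ hcg i)).elim
      · exact ((eQ i).2.1 h).elim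
      · exact (hcQ i ((show (eQ i : V) = g k from h) ▸ hcg k)).elim
      · rw [eQ.injective (Subtype.ext h)]
    · intro x
      by_cases hx : x = c
      · exact ⟨Sum.inl (), hx.symm⟩
      by_cases hcx : T.Adj c x
      · refine ⟨Sum.inr (Sum.inl (g.symm ⟨x, by simpa [P] using hcx⟩)), ?_⟩
        simp [φ]
      · refine ⟨Sum.inr (Sum.inr (eQ.symm ⟨x, hx, hcx⟩)), ?_⟩
        simp [φ]
  refine ⟨P.card, Fintype.card Q, hle, ⟨RelIso.symm ⟨Equiv.ofBijective φ hφ, ?_⟩⟩⟩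
  rintro (⟨⟩ | i | i) (⟨⟩ | k | k)
  · simp
  · exact iff_of_true (hcg k) (treeT_center_adj k)
  · exact iff_of_false (hcQ k) (treeT_not_center_adj k)
  · exact iff_of_true (hcg i).symm (treeT_center_adj i).symm
  · exact iff_of_false (hgg i k) (treeT_not_inl_adj i k)
  · exact (hgQ i k).trans (treeT_adj_iff i k).symm
  · exact iff_of_false (hcQ' i) fun h => treeT_not_center_adj i h.symm
  · rw [adj_comm, adj_comm (treeT _ _ _)]
    exact (hgQ k i).trans (treeT_adj_iff k i).symm
  · exact iff_of_false (hQQ i k) (treeT_not_inr_adj i k)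

/-- A finite forest with a vertex of degree at least two has two leaves with a common neighbour,
or a leaf whose neighbour has degree two. -/
lemma SimpleGraph.IsAcyclic.exists_twin_leaves_or_pendant_path [Finite V] (hT : T.IsAcyclic)
    {o a b : V} (hoa : T.Adj o a) (hob : T.Adj o b) (hab : a ≠ b) :
    (∃ v u u', u ≠ u' ∧ (∀ y, T.Adj u y ↔ y = v) ∧ ∀ y, T.Adj u' y ↔ y = v) ∨
      ∃ u v w, u ≠ w ∧ (∀ y, T.Adj u y ↔ y = v) ∧ ∀ y, T.Adj v y ↔ y = u ∨ y = w := by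
  have : Nonempty V := ⟨o⟩
  obtain ⟨u, z, p, hp, hmax⟩ := Walk.exists_isPath_forall_isPath_length_le_length T
  have hlen : 2 ≤ p.length :=
    hmax a b (.cons hoa.symm (.cons hob .nil)) (by simp [hoa.ne', hob.ne, hab])
  match p, hp with
  | .nil, _ => simp at hlen
  | .cons h .nil, _ => simp at hlen
  | .cons (v := v) h (.cons (v := w) h' r), hp =>
    have ht : (Walk.cons h' r).IsPath := hp.of_cons
    have hleaf (x) (hxv : T.Adj x v) (hx : x ∉ (Walk.cons h' r).support) (y) :
        T.Adj x y ↔ y = v := by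
      refine ⟨fun hxy => ?_, fun hy => hy ▸ hxv⟩
      have hxp : (Walk.cons hxv (.cons h' r)).IsPath := (Walk.cons_isPath_iff _ _).2 ⟨ht, hx⟩
      by_cases hy : y ∈ (Walk.cons hxv (.cons h' r)).support
      · simpa using hT.eq_snd_of_adj_start hxp hxy hy
      · have := hmax _ _ (.cons hxy.symm (.cons hxv (.cons h' r)))
          ((Walk.cons_isPath_iff _ _).2 ⟨hxp, hy⟩)
        simp at this
    have hnot (x) (hvx : T.Adj v x) (hxw : x ≠ w) : x ∉ (Walk.cons h' r).support :=
      fun hx => hxw (by simpa using hT.eq_snd_of_adj_start ht hvx hx)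
    have huw : u ≠ w := by
      rintro rfl
      simp at hp
    have hu := hleaf u h (hnot u h.symm huw)
    by_cases hx : ∃ x, T.Adj v x ∧ x ≠ u ∧ x ≠ w
    · obtain ⟨x, hvx, hxu, hxw⟩ := hx
      exact .inl ⟨v, u, x, hxu.symm, hu, hleaf x hvx.symm (hnot x hvx hxw)⟩
    · refine .inr ⟨u, v, w, huw, hu, fun y => ⟨fun hy => ?_, ?_⟩⟩
      · by_contra! hne
        exact hx ⟨y, hy, hne⟩
      · rintro (rfl | rfl)
        exacts [h.symm, h']

lemma SimpleGraph.IsTree.induce_compl_leaf [Finite V] (hT : T.IsTree) {u v : V}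
    (hu : ∀ y, T.Adj u y ↔ y = v) : (T.induce {u}ᶜ).IsTree := by
  classical
  have := Fintype.ofFinite V
  refine ⟨hT.connected.induce_compl_singleton_of_degree_eq_one ?_, hT.isAcyclic.induce _⟩
  exact degree_eq_one_iff_existsUnique_adj.2 ⟨v, (hu v).2 rfl, fun y hy => (hu y).1 hy⟩

end Structure

universe u

section Reduction

/-- The embedding `f` exhibits `H` as obtained from `T` by deleting a dissociation set that is
attached to `H` only at the vertex `w`, where `x` is a deleted neighbour of `w`, and every maximal
dissociation set of `H` is the trace of one of `T` that does not contain both `w` and `x`. -/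
structure IsReduction {V W : Type*} {T : SimpleGraph V} {H : SimpleGraph W} (f : H ↪g T)
    (w : W) (x : V) : Prop where
  adj : T.Adj (f w) x
  notMem_range : x ∉ Set.range f
  isDissoc_compl : IsDissoc T (Set.range f)ᶜ
  eq_of_adj : ∀ y z, z ∉ Set.range f → T.Adj (f y) z → y = w
  exists_extension : ∀ A, IsMaxDissoc H A →
    ∃ B, IsMaxDissoc T B ∧ f ⁻¹' B = A ∧ ¬ (f w ∈ B ∧ x ∈ B)

namespace IsReduction

variable {V W : Type*} {T : SimpleGraph V} {H : SimpleGraph W} {f : H ↪g T} {w : W} {x : V}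

lemma isDissoc_of_preimage (h : IsReduction f w x) {S : Set V} (hw : f w ∉ S)
    (hS : IsDissoc H (f ⁻¹' S)) : IsDissoc T S := by
  have hcross {y z} (hy : f y ∈ S) (hz : z ∉ Set.range f) : ¬ T.Adj (f y) z := fun hyz =>
    hw (h.eq_of_adj y z hz hyz ▸ hy)
  rw [isDissoc_iff]
  intro v hv a ha b hb hva hvb
  by_cases hvr : v ∈ Set.range f
  · obtain ⟨v, rfl⟩ := hvr
    obtain ⟨a, rfl⟩ : a ∈ Set.range f := by_contra fun har => hcross hv har hva
    obtain ⟨b, rfl⟩ : b ∈ Set.range f := by_contra fun hbr => hcross hv hbr hvb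
    rw [isDissoc_iff.1 hS v hv a ha b hb (f.map_adj_iff.1 hva) (f.map_adj_iff.1 hvb)]
  · refine isDissoc_iff.1 h.isDissoc_compl v hvr a ?_ b ?_ hva hvb
    · rintro ⟨a, rfl⟩
      exact hcross ha hvr hva.symm
    · rintro ⟨b, rfl⟩
      exact hcross hb hvr hvb.symm

lemma isDissoc_compl_of_isDissoc_compl (h : IsReduction f w x) (hH : IsDissoc H {w}ᶜ) :
    IsDissoc T {f w}ᶜ :=
  h.isDissoc_of_preimage (by simp) (hH.mono fun y hy => by
    rintro rfl
    exact hy rfl)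

lemma phi_add_one_le [Finite V] (h : IsReduction f w x) : phi H + 1 ≤ phi T := by
  obtain ⟨S, hle, hS⟩ := (isDissoc_pair (G := T) (f w) x).exists_isMaxDissoc_superset
  rw [← Set.ncard_singleton S]
  refine phi_add_ncard_le f {S} (by simpa) fun A hA => ?_
  obtain ⟨B, hB, hBA, hwx⟩ := h.exists_extension A hA
  refine ⟨B, hB, hBA, ?_⟩
  rintro rfl
  exact hwx ⟨hle (by simp), hle (by simp)⟩

lemma phi_add_two_le [Finite V] (h : IsReduction f w x) (hT : ∀ v, ¬ IsDissoc T {v}ᶜ) {c : W}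
    (hc : IsDissoc H {c}ᶜ) : phi H + 2 ≤ phi T := by
  obtain ⟨S, hle, hS⟩ := (isDissoc_pair (G := T) (f w) x).exists_isMaxDissoc_superset
  have hwS : f w ∈ S := hle (by simp)
  have hcw : w ≠ c := by
    rintro rfl
    exact hT _ (h.isDissoc_compl_of_isDissoc_compl hc)
  let R : Set V := {f c, f w}ᶜ
  have hR : IsMaxDissoc T R := by
    refine isMaxDissoc_iff_forall_insert.2 ⟨?_, fun z hz hd => ?_⟩
    · refine h.isDissoc_of_preimage (by simp [R]) (hc.mono fun y hy => ?_)
      rintro rfl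
      simp [R] at hy
    · obtain rfl | rfl : z = f c ∨ z = f w := by
        simpa [R, or_iff_not_imp_left] using hz
      · refine hT (f w) (hd.mono fun y hy => ?_)
        by_cases hyc : y = f c <;> simp_all [R]
      · refine hT (f c) (hd.mono fun y hy => ?_)
        by_cases hyc : y = f w <;> simp_all [R]
  have hSR : S ≠ R := by
    rintro rfl
    simp [R] at hwS
  rw [← Set.ncard_pair hSR]
  refine phi_add_ncard_le f {S, R} (by rintro _ (rfl | rfl) <;> assumption) fun A hA => ?_
  obtain ⟨B, hB, hBA, hwx⟩ := h.exists_extension A hA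
  refine ⟨B, hB, hBA, ?_⟩
  rintro (rfl | rfl)
  · exact hwx ⟨hwS, hle (by simp)⟩
  · have hAc := hA.2 _ hc fun y hy => by
      rintro rfl
      rw [← hBA] at hy
      simp [R] at hy
    have : w ∈ f ⁻¹' R := hBA ▸ hAc ▸ hcw
    simp [R] at this

end IsReduction

lemma card_compl_singleton_add_one {V : Type*} [Finite V] (u : V) :
    Nat.card ({u}ᶜ : Set V) + 1 = Nat.card V := by
  rw [Nat.card_coe_set_eq, ← Set.ncard_add_ncard_compl {u}, Set.ncard_singleton, add_comm]

lemma isReduction_of_twin_leaves {V : Type*} [Finite V] {T : SimpleGraph V} {v u u' : V}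
    (huu' : u ≠ u') (hu : ∀ y, T.Adj u y ↔ y = v) (hu' : ∀ y, T.Adj u' y ↔ y = v) :
    IsReduction (Embedding.induce (G := T) {u}ᶜ) ⟨v, ((hu v).2 rfl).ne'⟩ u where
  adj := ((hu v).2 rfl).symm
  notMem_range := by simp
  isDissoc_compl := (isDissoc_pair u u).mono (by simp)
  eq_of_adj := by
    intro y z hz hyz
    obtain rfl : z = u := by simpa using hz
    exact Subtype.ext ((hu _).1 hyz.symm)
  exists_extension A hA := by
    obtain ⟨B, hle, hB⟩ :=
      (hA.1.image (Embedding.induce (G := T) {u}ᶜ)).exists_isMaxDissoc_superset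
    have htr := hA.preimage_eq _ hB.1 hle
    refine ⟨B, hB, htr, fun ⟨hvB, huB⟩ => ?_⟩
    have hvu (b) (hb : b ∈ B) (hvb : T.Adj v b) : b = u :=
      isDissoc_iff.1 hB.1 v hvB b hb u huB hvb ((hu v).2 rfl).symm
    have hu'B : u' ∉ B := fun h => huu' (hvu u' h ((hu' v).2 rfl).symm).symm
    refine (isMaxDissoc_iff_forall_insert.1 hA).2 ⟨u', huu'.symm⟩ (fun h => ?_) ?_
    · rw [← htr] at h
      exact hu'B h
    have hd : IsDissoc T (insert u' (B \ {u})) := by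
      have hB' := isDissoc_iff.1 hB.1
      rw [isDissoc_iff]
      rintro x (rfl | ⟨hx, hxu⟩) a ha b hb hxa hxb
      · rw [(hu' a).1 hxa, (hu' b).1 hxb]
      · rcases ha with rfl | ⟨ha, hau⟩ <;> rcases hb with rfl | ⟨hb, hbu⟩
        · rfl
        · exact (hbu (hvu b hb ((hu' x).1 hxa.symm ▸ hxb))).elim
        · exact (hau (hvu a ha ((hu' x).1 hxb.symm ▸ hxa))).elim
        · exact hB' x hx a ha b hb hxa hxb
    refine (hd.preimage (Embedding.induce (G := T) {u}ᶜ)).mono ?_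
    rintro y (rfl | hy)
    · exact Or.inl rfl
    · rw [← htr] at hy
      exact Or.inr ⟨hy, y.2⟩

lemma SimpleGraph.IsTree.exists_isReduction {V : Type u} [Finite V] {T : SimpleGraph V}
    (hT : T.IsTree) (hbad : ∀ v, ¬ IsDissoc T {v}ᶜ) :
    ∃ (W : Type u) (_ : Finite W) (H : SimpleGraph W) (f : H ↪g T) (w : W) (x : V),
      IsReduction f w x ∧ H.IsTree ∧ Nat.card W < Nat.card V ∧ Nat.card V ≤ Nat.card W + 2 := by
  obtain ⟨o, a, b, hoa, hob, hab⟩ : ∃ o a b, T.Adj o a ∧ T.Adj o b ∧ a ≠ b := by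
    by_contra! hno
    exact hbad hT.connected.nonempty.some
      (isDissoc_iff.2 fun v _ a _ b _ hva hvb => hno v a b hva hvb)
  obtain ⟨v, u, u', huu', hu, hu'⟩ | ⟨u, v, w, huw, hu, hv⟩ :=
    hT.isAcyclic.exists_twin_leaves_or_pendant_path hoa hob hab
  · have := card_compl_singleton_add_one u
    exact ⟨({u}ᶜ : Set V), inferInstance, T.induce {u}ᶜ, _, _, _, isReduction_of_twin_leaves huu' hu hu',
      hT.induce_compl_leaf hu, by omega, by omega⟩
  · have huv : T.Adj u v := (hu v).2 rfl
    have hvw : T.Adj v w := (hv w).2 (.inr rfl)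
    let v' : ({u}ᶜ : Set V) := ⟨v, huv.ne'⟩
    let w' : ({v'}ᶜ : Set ({u}ᶜ : Set V)) := ⟨⟨w, huw.symm⟩, fun h => hvw.ne' (Subtype.ext_iff.1 h)⟩
    have hv' : ∀ y, (T.induce {u}ᶜ).Adj v' y ↔ y = w'.1 := by
      intro y
      have hy : (y : V) ≠ u := y.2
      simp [v', w', hv, hy, Subtype.ext_iff]
    let f := (Embedding.induce (G := T.induce {u}ᶜ) {v'}ᶜ).trans (Embedding.induce (G := T) {u}ᶜ)
    have hrange (z) : z ∈ Set.range f ↔ z ≠ u ∧ z ≠ v := by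
      constructor
      · rintro ⟨y, rfl⟩
        exact ⟨y.1.2, fun h => y.2 (Subtype.ext h)⟩
      · rintro ⟨hzu, hzv⟩
        exact ⟨⟨⟨z, hzu⟩, fun h => hzv (Subtype.ext_iff.1 h)⟩, rfl⟩
    have hcu := card_compl_singleton_add_one u
    have hcv := card_compl_singleton_add_one v'
    refine ⟨({v'}ᶜ : Set ({u}ᶜ : Set V)), inferInstance, (T.induce {u}ᶜ).induce {v'}ᶜ, f, w', v,
      ⟨hvw.symm, fun h => ((hrange v).1 h).2 rfl, ?_, ?_, ?_⟩,
      (hT.induce_compl_leaf hu).induce_compl_leaf hv', by omega, by omega⟩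
    · refine (isDissoc_pair u v).mono fun z hz => ?_
      by_contra! hne
      exact hz ((hrange z).2 (by simpa using hne))
    · intro y z hz hyz
      have hyr := (hrange _).1 (Set.mem_range_self y)
      have : z = u ∨ z = v := by
        by_contra! hne
        exact hz ((hrange z).2 hne)
      rcases this with rfl | rfl
      · exact (hyr.2 ((hu _).1 hyz.symm)).elim
      · exact Subtype.ext (Subtype.ext (((hv _).1 hyz.symm).resolve_left hyr.1))
    · intro A hA
      have hd : IsDissoc T (insert u (f '' A)) := by
        have hA' := isDissoc_iff.1 (hA.1.image f)
        have hu' (y) (hy : y ∈ f '' A) : ¬ T.Adj u y := by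
          obtain ⟨y, -, rfl⟩ := hy
          exact fun h => ((hrange _).1 ⟨y, rfl⟩).2 ((hu _).1 h)
        rw [isDissoc_iff]
        rintro x (rfl | hx) a ha b hb hxa hxb
        · rw [(hu a).1 hxa, (hu b).1 hxb]
        · rcases ha with rfl | ha
          · exact (hu' x hx hxa.symm).elim
          rcases hb with rfl | hb
          · exact (hu' x hx hxb.symm).elim
          exact hA' x hx a ha b hb hxa hxb
      obtain ⟨B, hle, hB⟩ := hd.exists_isMaxDissoc_superset
      refine ⟨B, hB, hA.preimage_eq f hB.1 ((Set.subset_insert _ _).trans hle),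
        fun ⟨hwB, hvB⟩ => huw ?_⟩
      exact isDissoc_iff.1 hB.1 v hvB u (hle (Set.mem_insert _ _)) w hwB huv.symm hvw

end Reduction

section Bound

lemma le_phi_treeT {p q : ℕ} (h : q ≤ p) (hpq : 2 ≤ p + q) :
    (1 + p + q + 1) / 2 + 1 ≤ phi (treeT p q h) := by
  rw [phi_treeT h hpq]
  split_ifs <;> omega

lemma card_eq_of_iso_treeT {V : Type*} {T : SimpleGraph V} {p q : ℕ} {h : q ≤ p}
    (e : T ≃g treeT p q h) : Nat.card V = 1 + p + q := by
  rw [Nat.card_congr e.toEquiv]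
  simp [add_assoc]

/-- A tree that is not some `T(p,q)` has strictly more than `⌈n/2⌉ + 1` maximal dissociation
sets. -/
theorem SimpleGraph.IsTree.lt_phi {V : Type u} [Finite V] {T : SimpleGraph V} (hT : T.IsTree)
    (hbad : ∀ v, ¬ IsDissoc T {v}ᶜ) : (Nat.card V + 1) / 2 + 1 < phi T := by
  induction hn : Nat.card V using Nat.strong_induction_on generalizing V with
  | _ n ih =>
  subst hn
  obtain ⟨W, _, H, f, w, x, h, hH, hlt, hle⟩ := hT.exists_isReduction hbad
  by_cases hc : ∃ c, IsDissoc H {c}ᶜ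
  · obtain ⟨c, hc⟩ := hc
    have h2 := h.phi_add_two_le hbad hc
    obtain ⟨p, q, hqp, ⟨e⟩⟩ := hH.exists_iso_treeT hc
    have hcard := card_eq_of_iso_treeT e
    have hpq : 2 ≤ p + q := by
      by_contra! hpq
      have hw := card_compl_singleton_add_one w
      have : Subsingleton ({w}ᶜ : Set W) := Finite.card_le_one_iff_subsingleton.1 (by omega)
      refine hbad _ (h.isDissoc_compl_of_isDissoc_compl (isDissoc_iff.2 ?_))
      exact fun _ _ a ha b hb _ _ => Set.subsingleton_coe _ |>.1 this ha hb
    have := le_phi_treeT hqp hpq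
    rw [phi_congr e] at h2
    omega
  · push Not at hc
    have := ih _ hlt hH hc rfl
    have := h.phi_add_one_le
    omega

lemma nonempty_iso_treeT_congr {V : Type*} {T : SimpleGraph V} {p q p' q' : ℕ} {h : q ≤ p}
    (e : T ≃g treeT p q h) (hp : p = p') (hq : q = q') (h' : q' ≤ p') :
    Nonempty (T ≃g treeT p' q' h') := by
  subst hp hq
  exact ⟨e⟩

end Bound

/-- a tree `T` of order `n ≥ 3` satisfies `phi T = ⌈n/2⌉ + 1` iff `n` is even
and `T ≅ T(n/2, (n-2)/2)`, or `n` is odd and `T ≅ T((n-1)/2, (n-1)/2)` or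
`T ≅ T((n+1)/2, (n-3)/2)`. -/
theorem stmt5 {V : Type*} [Fintype V] (T : SimpleGraph V) (n : ℕ) (hn : 3 ≤ n)
    (hcard : Fintype.card V = n) (hT : T.IsTree) :
    phi T = (n + 1) / 2 + 1 ↔
      (Even n ∧ Nonempty (T ≃g treeT (n / 2) ((n - 2) / 2) (by omega))) ∨
      (Odd n ∧ (Nonempty (T ≃g treeT ((n - 1) / 2) ((n - 1) / 2) le_rfl) ∨
        Nonempty (T ≃g treeT ((n + 1) / 2) ((n - 3) / 2) (by omega)))) := by
  rw [← Nat.card_eq_fintype_card] at hcard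
  constructor
  · intro hphi
    by_cases hc : ∃ c, IsDissoc T {c}ᶜ
    · obtain ⟨c, hc⟩ := hc
      obtain ⟨p, q, h, ⟨e⟩⟩ := hT.exists_iso_treeT hc
      have hpq := card_eq_of_iso_treeT e
      rw [phi_congr e, phi_treeT h (by omega)] at hphi
      rcases Nat.even_or_odd n with hn2 | hn2
      · have := Nat.even_iff.1 hn2
        refine .inl ⟨hn2, nonempty_iso_treeT_congr e ?_ ?_ _⟩ <;> split_ifs at hphi <;> omega
      · have := Nat.odd_iff.1 hn2
        refine .inr ⟨hn2, ?_⟩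
        split_ifs at hphi
        · exact .inl (nonempty_iso_treeT_congr e (by omega) (by omega) _)
        · exact .inr (nonempty_iso_treeT_congr e (by omega) (by omega) _)
    · push Not at hc
      have := hT.lt_phi hc
      omega
  · rintro (⟨hn2, ⟨e⟩⟩ | ⟨hn2, ⟨⟨e⟩⟩ | ⟨⟨e⟩⟩⟩)
    · have := Nat.even_iff.1 hn2
      rw [phi_congr e, phi_treeT _ (by omega)]
      split_ifs <;> omega
    · have := Nat.odd_iff.1 hn2
      rw [phi_congr e, phi_treeT _ (by omega)]
      rw [if_pos rfl]
      omega
    · have := Nat.odd_iff.1 hn2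
      rw [phi_congr e, phi_treeT _ (by omega)]
      split_ifs <;> omega
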